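/- Let α be a positive irrational and suppose g ∈ C(𝕋²,ℂ) is such that exp(g) ∈ 𝒜_α and exp(g) is invertible as an element of the Banach algebra 𝒜_α (equivalently, its Gelfand transform never vanishes on the Gelfand space of 𝒜_α). Then exp(g/2) ∈ 𝒜_α. -/

import Mathlib

/-!
Write `B` for the closure in `C(𝕋²)` of the trigonometric polynomials `∑ c_{mn} χ_{m,n}` supported
on the half-plane `m + α n ≥ 0`. The proof has three parts.

* `B = 𝒜_α` (`mem_closedPoly_iff`). For `f ∈ 𝒜_α`, convolving `f` with a trigonometric polynomial
  deletes the frequencies outside the half-plane, and an approximate identity made of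
  trigonometric polynomials exists by the Stone–Weierstrass theorem.
* For `r ∈ [0, 1]` the substitution `χ_{m,n} ↦ r^{m + α n} χ_{m,n}` is a homomorphism on
  half-plane polynomials. It is contractive for the supremum norm (`norm_evalW_rpowW_le`): with
  `r = e^{-ζ}` the value at a fixed point of the torus is a bounded holomorphic function of `ζ` on
  the right half-plane, whose values on the imaginary axis are values of the original
  polynomial at other points of the torus, so Phragmén–Lindelöf applies. At `r = 0` only
  the constant term survives, because `α` is irrational.
* Every unit of `B` is a square (`exists_sq_of_contraction`). The squares form a clopen subgroup
  of `Bˣ`. A unit can be replaced by a polynomial close to it, and the contractions above give a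
  path of units from that polynomial to a constant, which is a square.

Hence `exp g = k²` with `k ∈ 𝒜_α`. The functions `exp (g/2)` and `k` have the same square and do not
vanish, so on the connected space `𝕋²` they agree up to a global sign.
-/

open MeasureTheory

noncomputable section

/-- Borel measurable structure on the circle group `𝕋`. -/
instance : MeasurableSpace Circle := borel Circle
instance : BorelSpace Circle := ⟨rfl⟩

/-- The normalized Haar (Lebesgue) measure `μ` on the 2-torus `𝕋² = 𝕋 × 𝕋`. -/
def haarT2 : Measure (Circle × Circle) :=
  Measure.haarMeasure ⟨⟨Set.univ, isCompact_univ⟩, by simp⟩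

/-- The character `χ_{m,n}` on the 2-torus, `χ_{m,n}(z,w) = z^m * w^n`. -/
def chi (m n : ℤ) : C(Circle × Circle, ℂ) :=
  ⟨fun p => ((p.1 ^ m : Circle) : ℂ) * ((p.2 ^ n : Circle) : ℂ), by
    have h1 : Continuous fun p : Circle × Circle => p.1 ^ m :=
      (continuous_zpow m).comp continuous_fst
    have h2 : Continuous fun p : Circle × Circle => p.2 ^ n :=
      (continuous_zpow n).comp continuous_snd
    have hc : Continuous ((↑) : Circle → ℂ) := continuous_induced_dom
    exact (hc.comp h1).mul (hc.comp h2)⟩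

/-- The Fourier coefficient `f̂(m,n) = ∫_{𝕋²} f(z,w) z^{-m} w^{-n} dμ(z,w)`. -/
def fourierCoef (f : C(Circle × Circle, ℂ)) (m n : ℤ) : ℂ :=
  ∫ p, f p * chi (-m) (-n) p ∂haarT2

/-- The uniform algebra `𝒜_α ⊆ C(𝕋²,ℂ)`, as a set: those continuous functions whose
Fourier coefficients `f̂(m,n)` vanish whenever `m + α n < 0`. -/
def Aset (α : ℝ) : Set C(Circle × Circle, ℂ) :=
  {f | ∀ m n : ℤ, (m : ℝ) + α * n < 0 → fourierCoef f m n = 0}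

/-- The function `exp ∘ g ∈ C(𝕋²,ℂ)`. -/
def cexp (g : C(Circle × Circle, ℂ)) : C(Circle × Circle, ℂ) :=
  ⟨fun p => Complex.exp (g p), Complex.continuous_exp.comp g.continuous⟩

/-! ### Square roots of units in commutative Banach algebras -/

/-- Squaring has invertible derivative `2` at `1`, so by the inverse function theorem the squares
of units contain a neighbourhood of `1`. -/
theorem isOpen_squares (B : Type*) [NormedCommRing B] [NormedAlgebra ℂ B] [CompleteSpace B] :
    IsOpen (Subgroup.square Bˣ : Set Bˣ) := by
  apply Subgroup.isOpen_of_mem_nhds (g := 1)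
  have hd : HasStrictFDerivAt (fun x : B => x ^ 2)
      ((ContinuousLinearEquiv.smulLeft (R₁ := ℂ) (M₁ := B) (Units.mk0 (2 : ℂ) two_ne_zero) : B ≃L[ℂ] B) : B →L[ℂ] B) 1 := by
    have := (hasStrictFDerivAt_id (𝕜 := ℂ) (1 : B)).pow 2
    exact this.congr_fderiv (by ext x; simp [Units.smul_def, two_smul, add_mul])
  have h1 := hd.map_nhds_eq_of_equiv
  have hu : {x : B | IsUnit x} ∈ nhds (1 : B) := Units.isOpen.mem_nhds isUnit_one
  have h2 : (fun x : B => x ^ 2) '' {x : B | IsUnit x} ∈ nhds (1 : B) := by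
    have := Filter.image_mem_map (m := fun x : B => x ^ 2) hu
    rw [h1] at this
    simpa using this
  have h3 := (Units.continuous_val (M := B)).continuousAt (x := 1) h2
  refine Filter.mem_of_superset h3 ?_
  rintro u ⟨x, ⟨v, rfl⟩, hv⟩
  refine ⟨v, Units.ext ?_⟩
  simpa [sq] using hv.symm

open scoped NNReal in
/-- The homotopy argument in abstract form: `E r`, `0 ≤ r ≤ 1`, is a continuous family of
homomorphisms into `B`, dominated in norm by `E 1`, that deforms the dense image of `E 1` to the
scalars. -/
theorem exists_sq_of_contraction {B R : Type*} [NormedCommRing B] [NormedAlgebra ℂ B]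
    [CompleteSpace B] [Ring R] [Algebra ℂ R] (E : ℝ≥0 → R →ₐ[ℂ] B)
    (hcont : ∀ a, Continuous fun r => E r a) (hle : ∀ a, ∀ r ≤ 1, ‖E r a‖ ≤ ‖E 1 a‖)
    (hdense : DenseRange (E 1)) (hzero : ∀ a, ∃ c : ℂ, E 0 a = algebraMap ℂ B c) (u : Bˣ) :
    IsSquare u := by
  have hopen := isOpen_squares B
  have hV : IsOpen {v : Bˣ | v⁻¹ * u ∈ Subgroup.square Bˣ} :=
    hopen.preimage (by fun_prop : Continuous fun v : Bˣ => v⁻¹ * u)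
  -- Near `u` there is a unit of the form `p = E 1 a` in the same class as `u` modulo squares.
  obtain ⟨a, p, hp, hpa⟩ := hdense.exists_mem_open (Units.isOpenEmbedding_val.isOpenMap _ hV)
    ⟨u, u, by simp, rfl⟩
  have hW : IsOpen {x : B | ‖E 1 a * x - 1‖ < 1} :=
    isOpen_lt (by fun_prop) continuous_const
  obtain ⟨b, hb⟩ := hdense.exists_mem_open hW ⟨((p⁻¹ : Bˣ) : B), by simp [← hpa]⟩
  -- `E r` is contractive relative to `E 1`, so `E r b` remains an approximate inverse of `E r a`.
  have hunit : ∀ r : Set.Icc (0 : ℝ≥0) 1, IsUnit (E r a) := by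
    rintro ⟨r, hr0, hr⟩
    have h1 : ‖E r (a * b - 1)‖ < 1 := by
      refine (hle _ r hr).trans_lt ?_
      simpa using hb
    have h2 : IsUnit (E r a * E r b) := by
      have := (Units.oneSub (-E r (a * b - 1)) (by rwa [norm_neg])).isUnit
      simpa using this
    exact isUnit_of_mul_isUnit_left h2
  have hγ : Continuous fun r : Set.Icc (0 : ℝ≥0) 1 => (hunit r).unit := by
    rw [Units.isOpenEmbedding_val.isInducing.continuous_iff]
    exact (hcont a).comp continuous_subtype_val
  have hclopen : IsClopen (Subgroup.square Bˣ : Set Bˣ) :=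
    ⟨Subgroup.isClosed_of_isOpen _ hopen, hopen⟩
  have : PreconnectedSpace (Set.Icc (0 : ℝ≥0) 1) :=
    Subtype.preconnectedSpace isPreconnected_Icc
  have huniv := (hclopen.preimage hγ).eq_univ ⟨⟨0, by simp⟩, by
    obtain ⟨c, hc⟩ := hzero a
    obtain ⟨d, rfl⟩ := IsAlgClosed.exists_pow_nat_eq c two_pos
    have h0 := hunit ⟨0, by simp⟩
    have hd : IsUnit (algebraMap ℂ B d) := by
      have h0' := h0
      simp only [hc, sq, map_mul] at h0'
      exact isUnit_of_mul_isUnit_left h0'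
    refine ⟨hd.unit, Units.ext ?_⟩
    simp [hc, sq]⟩
  have h1 : (hunit ⟨1, by simp⟩).unit ∈ Subgroup.square Bˣ := by
    have : (⟨1, by simp⟩ : Set.Icc (0 : ℝ≥0) 1) ∈ (Set.univ : Set (Set.Icc (0 : ℝ≥0) 1)) := trivial
    rw [← huniv] at this
    exact this
  have h2 : (hunit ⟨1, by simp⟩).unit = p := Units.ext (by simp [hpa])
  rw [h2] at h1
  have := mul_mem h1 hp
  simpa using this

/-! ### Characters and Fourier coefficients on the torus -/

instance : haarT2.IsHaarMeasure := by unfold haarT2; infer_instance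
instance : IsProbabilityMeasure haarT2 := ⟨Measure.haarMeasure_self⟩

theorem chi_apply (m n : ℤ) (p : Circle × Circle) :
    chi m n p = ((p.1 ^ m : Circle) : ℂ) * ((p.2 ^ n : Circle) : ℂ) := rfl

theorem chi_zero : chi 0 0 = 1 := by ext p; simp [chi_apply]

theorem chi_mul_chi (m n m' n' : ℤ) : chi m n * chi m' n' = chi (m + m') (n + n') := by
  ext p; simp only [ContinuousMap.mul_apply, chi_apply, zpow_add, Circle.coe_mul]; ring

theorem chi_mul_apply (m n : ℤ) (x y : Circle × Circle) :
    chi m n (x * y) = chi m n x * chi m n y := by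
  simp only [chi_apply, Prod.fst_mul, Prod.snd_mul, mul_zpow, Circle.coe_mul]; ring

theorem chi_inv_apply (m n : ℤ) (x : Circle × Circle) : chi m n x⁻¹ = chi (-m) (-n) x := by
  simp [chi_apply]

theorem norm_chi_apply (m n : ℤ) (x : Circle × Circle) : ‖chi m n x‖ = 1 := by
  simp only [chi_apply, norm_mul, Circle.norm_coe, mul_one]

theorem integrable_T2 (f : C(Circle × Circle, ℂ)) : Integrable f haarT2 :=
  f.continuous.integrable_of_hasCompactSupport (HasCompactSupport.of_compactSpace _)

theorem exp_pi_div_zpow {m : ℤ} (hm : m ≠ 0) : Circle.exp (Real.pi / m) ^ m = -1 := by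
  rw [← Circle.exp_intCast_mul, mul_div_cancel₀ _ (by exact_mod_cast hm)]
  ext; simp

/-- Translating by a point `y` with `χ_{m,n}(y) = -1` shows that the integral equals its own
negative. -/
theorem integral_chi {m n : ℤ} (h : (m, n) ≠ 0) : ∫ p, chi m n p ∂haarT2 = 0 := by
  obtain ⟨y, hy⟩ : ∃ y, chi m n y = -1 := by
    by_cases hm : m = 0
    · have hn : n ≠ 0 := by rintro rfl; simp [hm] at h
      exact ⟨(1, Circle.exp (Real.pi / n)), by simp [chi_apply, exp_pi_div_zpow hn]⟩
    · exact ⟨(Circle.exp (Real.pi / m), 1), by simp [chi_apply, exp_pi_div_zpow hm]⟩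
  have h1 := integral_mul_left_eq_self (μ := haarT2) (fun p => chi m n p) y
  simp only [chi_mul_apply, hy, integral_const_mul] at h1
  linear_combination (-1 / 2 : ℂ) * h1

theorem fourierCoef_chi {m n m' n' : ℤ} (h : (m, n) ≠ (m', n')) :
    fourierCoef (chi m n) m' n' = 0 := by
  simp only [fourierCoef, ← ContinuousMap.mul_apply, chi_mul_chi]
  apply integral_chi
  contrapose! h
  simp only [Prod.mk_eq_zero] at h
  ext <;> simp <;> lia

/-- The Fourier coefficient as a continuous linear functional of norm at most `1`. -/
def fourierCoefCLM (m n : ℤ) : C(Circle × Circle, ℂ) →L[ℂ] ℂ :=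
  LinearMap.mkContinuous
    { toFun := fun f => fourierCoef f m n
      map_add' := fun f g => by
        simp only [fourierCoef, ContinuousMap.add_apply, add_mul]
        exact integral_add (integrable_T2 (f * chi _ _)) (integrable_T2 (g * chi _ _))
      map_smul' := fun c f => by
        simp only [fourierCoef, ContinuousMap.smul_apply, smul_eq_mul, mul_assoc,
          integral_const_mul, RingHom.id_apply] } 1 (fun f => by
    have := norm_integral_le_of_norm_le_const (μ := haarT2) (C := ‖f‖)
      (f := fun p => f p * chi (-m) (-n) p) (Filter.Eventually.of_forall fun p => by
        rw [norm_mul, norm_chi_apply, mul_one]; exact f.norm_coe_le_norm p)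
    simpa [fourierCoef] using this)

theorem fourierCoefCLM_apply (m n : ℤ) (f : C(Circle × Circle, ℂ)) :
    fourierCoefCLM m n f = fourierCoef f m n := rfl

theorem isClosed_Aset (α : ℝ) : IsClosed (Aset α) := by
  simp only [Aset, ← fourierCoefCLM_apply, Set.ofPred_forall]
  exact isClosed_iInter fun m => isClosed_iInter fun n => isClosed_iInter fun _ =>
    isClosed_eq (fourierCoefCLM m n).continuous continuous_const

/-! ### Half-plane polynomials and their contractions -/

/-- The frequency `m + α n` as an additive homomorphism. -/
def lam (α : ℝ) : ℤ × ℤ →+ ℝ where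
  toFun j := (j.1 : ℝ) + α * j.2
  map_zero' := by simp
  map_add' i j := by push_cast [Prod.fst_add, Prod.snd_add]; ring

/-- The half-plane of frequencies `m + α n ≥ 0`, as a submonoid of `ℤ²`. -/
def posHalf (α : ℝ) : AddSubmonoid (ℤ × ℤ) :=
  (AddSubmonoid.nonneg ℝ).comap (lam α)

theorem lam_nonneg {α : ℝ} (j : posHalf α) : 0 ≤ lam α j := j.2

/-- The element `∑ c_j j` of the monoid algebra of the half-plane, realized as the function
`∑ c_j ρ(j) χ_j` on the torus, for a multiplicative weight `ρ`. The formal monoid algebra is used so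
that changing the weight is well defined without proving linear independence of characters. -/
def evalW {α : ℝ} (ρ : Multiplicative (posHalf α) →* ℂ) :
    AddMonoidAlgebra ℂ (posHalf α) →ₐ[ℂ] C(Circle × Circle, ℂ) :=
  AddMonoidAlgebra.lift ℂ _ _
    { toFun := fun j => ρ j • chi j.toAdd.1.1 j.toAdd.1.2
      map_one' := by simp [chi_zero]
      map_mul' := fun i j => by
        simp [chi_mul_chi, smul_smul, mul_comm] }

theorem evalW_of {α : ℝ} (ρ : Multiplicative (posHalf α) →* ℂ) (j : posHalf α) :
    evalW ρ (AddMonoidAlgebra.of ℂ _ (Multiplicative.ofAdd j)) =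
      ρ (Multiplicative.ofAdd j) • chi j.1.1 j.1.2 := by
  rw [evalW, AddMonoidAlgebra.lift_of]; rfl

open scoped NNReal

/-- The weight `j ↦ r ^ (m + α n)` for real `r ≥ 0`; for `r = 0` it is `1` at frequency `0` and
vanishes at positive frequencies. -/
def rpowW (α : ℝ) (r : ℝ≥0) : Multiplicative (posHalf α) →* ℂ where
  toFun j := ((r ^ lam α j.toAdd : ℝ≥0) : ℂ)
  map_one' := by simp
  map_mul' i j := by
    simp only [toAdd_mul, AddSubmonoid.coe_add, map_add]
    rw [NNReal.rpow_add_of_nonneg _ (lam_nonneg _) (lam_nonneg _)]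
    push_cast; rfl

/-- The weight `j ↦ exp (-ζ (m + α n))`, the holomorphic extension of `rpowW` with
`r = exp (-ζ)`. -/
def expW (α : ℝ) (ζ : ℂ) : Multiplicative (posHalf α) →* ℂ where
  toFun j := Complex.exp (-ζ * lam α j.toAdd)
  map_one' := by simp
  map_mul' i j := by
    simp only [toAdd_mul, AddSubmonoid.coe_add, map_add, Complex.ofReal_add, mul_add,
      Complex.exp_add]

theorem rpowW_eq_expW (α : ℝ) {r : ℝ≥0} (hr : 0 < r) :
    rpowW α r = expW α ((-Real.log r : ℝ) : ℂ) := by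
  refine MonoidHom.ext fun j => ?_
  change ((r ^ lam α j.toAdd : ℝ≥0) : ℂ) = Complex.exp (-((-Real.log r : ℝ) : ℂ) * lam α j.toAdd)
  rw [← Complex.ofReal_neg, neg_neg, ← Complex.ofReal_mul, ← Complex.ofReal_exp,
    ← Real.rpow_def_of_pos (by exact_mod_cast hr)]
  simp

theorem rpowW_one (α : ℝ) (j) : rpowW α 1 j = 1 := by simp [rpowW]

/-- A purely imaginary parameter acts as a translation of the torus. -/
theorem evalW_expW_imag {α : ℝ} (a : AddMonoidAlgebra ℂ (posHalf α)) (t : ℝ)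
    (x : Circle × Circle) :
    evalW (expW α (t * Complex.I)) a x =
      evalW (rpowW α 1) a ((Circle.exp (-t), Circle.exp (-(α * t))) * x) := by
  induction a using AddMonoidAlgebra.induction_on with
  | of j =>
    simp only [evalW_of, rpowW_one, ContinuousMap.smul_apply, chi_mul_apply, one_smul,
      smul_eq_mul]
    congr 1
    simp only [chi_apply, ← Circle.exp_intCast_mul, Circle.coe_exp, ← Complex.exp_add]
    simp only [expW, lam, MonoidHom.coe_mk, OneHom.coe_mk, toAdd_ofAdd, AddMonoidHom.coe_mk, ZeroHom.coe_mk]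
    congr 1
    push_cast
    ring
  | add a b ha hb => simp only [map_add, ContinuousMap.add_apply, ha, hb]
  | smul c a ha => simp only [map_smul, ContinuousMap.smul_apply, ha]

theorem differentiable_evalW {α : ℝ} (a : AddMonoidAlgebra ℂ (posHalf α))
    (x : Circle × Circle) : Differentiable ℂ fun ζ => evalW (expW α ζ) a x := by
  induction a using AddMonoidAlgebra.induction_on with
  | of j =>
    simp only [evalW_of, ContinuousMap.smul_apply, expW, MonoidHom.coe_mk, OneHom.coe_mk]
    fun_prop
  | add a b ha hb => simpa only [map_add, ContinuousMap.add_apply] using ha.fun_add hb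
  | smul c a ha => simpa only [map_smul, ContinuousMap.smul_apply] using ha.fun_const_smul c

theorem bounded_evalW {α : ℝ} (a : AddMonoidAlgebra ℂ (posHalf α)) (x : Circle × Circle) :
    ∃ C, ∀ ζ : ℂ, 0 ≤ ζ.re → ‖evalW (expW α ζ) a x‖ ≤ C := by
  induction a using AddMonoidAlgebra.induction_on with
  | of j =>
    refine ⟨1, fun ζ hζ => ?_⟩
    simp only [evalW_of, ContinuousMap.smul_apply, expW, MonoidHom.coe_mk, OneHom.coe_mk,
      norm_smul, norm_chi_apply, mul_one, Complex.norm_exp, toAdd_ofAdd]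
    simpa using mul_nonneg hζ (lam_nonneg j)
  | add a b ha hb =>
    obtain ⟨C, hC⟩ := ha
    obtain ⟨D, hD⟩ := hb
    refine ⟨C + D, fun ζ hζ => ?_⟩
    rw [map_add, ContinuousMap.add_apply]
    exact norm_add_le_of_le (hC ζ hζ) (hD ζ hζ)
  | smul c a ha =>
    obtain ⟨C, hC⟩ := ha
    refine ⟨‖c‖ * C, fun ζ hζ => ?_⟩
    rw [map_smul, ContinuousMap.smul_apply, norm_smul]
    exact mul_le_mul_of_nonneg_left (hC ζ hζ) (norm_nonneg _)

/-- Contractivity, by the Phragmén–Lindelöf principle in the right half-plane. -/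
theorem norm_evalW_expW_le {α : ℝ} (a : AddMonoidAlgebra ℂ (posHalf α)) {ζ : ℂ}
    (hζ : 0 ≤ ζ.re) : ‖evalW (expW α ζ) a‖ ≤ ‖evalW (rpowW α 1) a‖ := by
  rw [ContinuousMap.norm_le _ (norm_nonneg _)]
  intro x
  obtain ⟨C, hC⟩ := bounded_evalW a x
  refine PhragmenLindelof.right_half_plane_of_bounded_on_real
    (f := fun ζ => evalW (expW α ζ) a x) (differentiable_evalW a x).diffContOnCl
    ⟨1, by norm_num, 0, ?_⟩ ?_ (fun t => ?_) hζ
  · refine Asymptotics.IsBigO.of_bound C ?_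
    refine Filter.eventually_inf_principal.2 (Filter.Eventually.of_forall fun z hz => ?_)
    simpa using hC z (le_of_lt hz)
  · refine ⟨C, Filter.eventually_map.2 ?_⟩
    filter_upwards [Filter.eventually_ge_atTop (0 : ℝ)] with t ht
    exact hC t (by simpa using ht)
  · simp only [evalW_expW_imag]
    exact ContinuousMap.norm_coe_le_norm _ _

theorem continuous_evalW_rpowW {α : ℝ} (a : AddMonoidAlgebra ℂ (posHalf α)) :
    Continuous fun r => evalW (rpowW α r) a := by
  induction a using AddMonoidAlgebra.induction_on with
  | of j =>
    simp only [evalW_of]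
    have h : Continuous fun r => rpowW α r (Multiplicative.ofAdd j) := Complex.continuous_ofReal.comp
      (NNReal.continuous_coe.comp (NNReal.continuous_rpow_const (lam_nonneg j)))
    exact h.smul continuous_const
  | add a b ha hb => simpa only [map_add] using ha.fun_add hb
  | smul c a ha => simpa only [map_smul] using ha.fun_const_smul c

/-- For `r > 0` this is `norm_evalW_expW_le`; the case `r = 0` follows by continuity in `r`. -/
theorem norm_evalW_rpowW_le {α : ℝ} (a : AddMonoidAlgebra ℂ (posHalf α)) {r : ℝ≥0}
    (hr : r ≤ 1) : ‖evalW (rpowW α r) a‖ ≤ ‖evalW (rpowW α 1) a‖ := by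
  have hcl : IsClosed {r : ℝ≥0 | ‖evalW (rpowW α r) a‖ ≤ ‖evalW (rpowW α 1) a‖} :=
    isClosed_le (continuous_evalW_rpowW a).norm continuous_const
  have hsub : Set.Ioc (0 : ℝ≥0) 1 ⊆
      {r : ℝ≥0 | ‖evalW (rpowW α r) a‖ ≤ ‖evalW (rpowW α 1) a‖} := by
    rintro s ⟨hs0, hs1⟩
    rw [Set.mem_ofPred_eq, rpowW_eq_expW α hs0]
    refine norm_evalW_expW_le a ?_
    rw [Complex.ofReal_re, neg_nonneg]
    exact Real.log_nonpos s.2 (by exact_mod_cast hs1)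
  have := closure_minimal hsub hcl
  rw [closure_Ioc zero_ne_one] at this
  exact this ⟨zero_le, hr⟩

theorem evalW_rpowW_zero {α : ℝ} (hirr : Irrational α) (a : AddMonoidAlgebra ℂ (posHalf α)) :
    ∃ c : ℂ, evalW (rpowW α 0) a = algebraMap ℂ _ c := by
  induction a using AddMonoidAlgebra.induction_on with
  | of j =>
    rw [evalW_of]
    rcases (lam_nonneg j).eq_or_lt with h | h
    · have h0 : j.1 = 0 := by
        obtain ⟨⟨m, n⟩, hj⟩ := j
        simp only [lam, AddMonoidHom.coe_mk, ZeroHom.coe_mk] at h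
        have hn : n = 0 := by
          by_contra hn
          exact ((hirr.mul_intCast hn).intCast_add m).ne_zero h.symm
        subst hn
        simpa using h.symm
      exact ⟨rpowW α 0 (Multiplicative.ofAdd j), by
        rw [h0]; simp [chi_zero, Algebra.algebraMap_eq_smul_one]⟩
    · refine ⟨0, ?_⟩
      have : rpowW α 0 (Multiplicative.ofAdd j) = 0 := by
        change ((0 ^ lam α j : ℝ≥0) : ℂ) = 0
        rw [NNReal.zero_rpow h.ne']; simp
      rw [this, zero_smul, map_zero]
  | add a b ha hb =>
    obtain ⟨c, hc⟩ := ha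
    obtain ⟨d, hd⟩ := hb
    exact ⟨c + d, by simp only [map_add, hc, hd]⟩
  | smul c a ha =>
    obtain ⟨d, hd⟩ := ha
    exact ⟨c * d, by rw [map_smul, hd, map_mul, Algebra.smul_def]⟩

theorem evalW_mem_range_one {α : ℝ} (ρ : Multiplicative (posHalf α) →* ℂ)
    (a : AddMonoidAlgebra ℂ (posHalf α)) : evalW ρ a ∈ (evalW (rpowW α 1)).range := by
  induction a using AddMonoidAlgebra.induction_on with
  | of j =>
    rw [evalW_of]
    refine Subalgebra.smul_mem _ ?_ _
    refine AlgHom.mem_range _ |>.2 ⟨AddMonoidAlgebra.of ℂ _ (Multiplicative.ofAdd j), ?_⟩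
    rw [evalW_of, rpowW_one, one_smul]
  | add a b ha hb => rw [map_add]; exact add_mem ha hb
  | smul c a ha => rw [map_smul]; exact Subalgebra.smul_mem _ ha c

theorem evalW_mem_Aset {α : ℝ} (a : AddMonoidAlgebra ℂ (posHalf α)) :
    evalW (rpowW α 1) a ∈ Aset α := by
  intro m n hmn
  rw [← fourierCoefCLM_apply]
  induction a using AddMonoidAlgebra.induction_on with
  | of j =>
    rw [evalW_of, map_smul, fourierCoefCLM_apply, fourierCoef_chi, smul_zero]
    intro h
    have := lam_nonneg j
    rw [show j.1 = (m, n) from h] at this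
    exact absurd hmn (not_lt.2 this)
  | add a b ha hb => rw [map_add, map_add, ha, hb, add_zero]
  | smul c a ha => rw [map_smul, map_smul, ha, smul_zero]

/-! ### Density of half-plane polynomials -/

/-- The star subalgebra of all trigonometric polynomials, with carrier the span of the
characters. -/
def trigPoly : StarSubalgebra ℂ C(Circle × Circle, ℂ) where
  carrier := Submodule.span ℂ (Set.range fun j : ℤ × ℤ => chi j.1 j.2)
  add_mem' := add_mem
  zero_mem' := zero_mem _
  algebraMap_mem' c := by
    rw [Algebra.algebraMap_eq_smul_one, ← chi_zero]
    exact Submodule.smul_mem _ _ (Submodule.subset_span ⟨0, rfl⟩)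
  mul_mem' := by
    intro a b ha hb
    have := Submodule.mul_mem_mul ha hb
    rw [Submodule.span_mul_span] at this
    refine Submodule.span_mono ?_ this
    rintro _ ⟨_, ⟨i, rfl⟩, _, ⟨j, rfl⟩, rfl⟩
    exact ⟨i + j, (chi_mul_chi _ _ _ _).symm⟩
  star_mem' := by
    intro a ha
    refine Submodule.span_induction (p := fun a _ => star a ∈
      Submodule.span ℂ (Set.range fun j : ℤ × ℤ => chi j.1 j.2)) ?_ ?_ ?_ ?_ ha
    · rintro _ ⟨j, rfl⟩
      refine Submodule.subset_span ⟨-j, ?_⟩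
      ext p
      simp [chi_apply, ← Circle.coe_inv_eq_conj]
    · simp
    · intro x y _ _ hx hy
      rw [star_add]; exact add_mem hx hy
    · intro c x _ hx
      rw [star_smul]; exact Submodule.smul_mem _ _ hx

theorem dense_trigPoly : Dense
    (Submodule.span ℂ (Set.range fun j : ℤ × ℤ => chi j.1 j.2) : Set C(Circle × Circle, ℂ)) := by
  have := ContinuousMap.starSubalgebra_topologicalClosure_eq_top_of_separatesPoints trigPoly (by
    intro x y hxy
    have hmem : ∀ m n, chi m n ∈ trigPoly := fun m n => Submodule.subset_span ⟨(m, n), rfl⟩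
    by_cases h : x.1 = y.1
    · refine ⟨_, ⟨chi 0 1, hmem 0 1, rfl⟩, fun h' => hxy (Prod.ext h ?_)⟩
      exact Circle.ext (by simpa [chi_apply] using h')
    · refine ⟨_, ⟨chi 1 0, hmem 1 0, rfl⟩, fun h' => h ?_⟩
      exact Circle.ext (by simpa [chi_apply] using h'))
  rw [dense_iff_closure_eq]
  have h2 : (trigPoly.topologicalClosure : Set C(Circle × Circle, ℂ)) = Set.univ := by
    rw [this]; rfl
  rwa [StarSubalgebra.topologicalClosure_coe] at h2

theorem conv_chi (f : C(Circle × Circle, ℂ)) (m n : ℤ) (x : Circle × Circle) :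
    ∫ v, f (x * v) * chi m n v ∂haarT2 = fourierCoef f (-m) (-n) * chi (-m) (-n) x := by
  rw [← integral_mul_left_eq_self (μ := haarT2) _ x⁻¹]
  simp only [mul_inv_cancel_left, chi_mul_apply, chi_inv_apply, fourierCoef, neg_neg]
  rw [← integral_mul_const]
  congr 1; ext v; ring

theorem integrable_conv (f q : C(Circle × Circle, ℂ)) (x : Circle × Circle) :
    Integrable (fun v => f (x * v) * q v) haarT2 :=
  integrable_T2 ((f.comp (ContinuousMap.mulLeft x)) * q)

/-- Convolving `f ∈ 𝒜_α` with a trigonometric polynomial yields a half-plane polynomial. -/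
theorem conv_trigPoly {α : ℝ} {f : C(Circle × Circle, ℂ)} (hf : f ∈ Aset α)
    {q : C(Circle × Circle, ℂ)}
    (hq : q ∈ Submodule.span ℂ (Set.range fun j : ℤ × ℤ => chi j.1 j.2)) :
    ∃ a : AddMonoidAlgebra ℂ (posHalf α), ∀ x,
      ∫ v, f (x * v) * q v ∂haarT2 = evalW (rpowW α 1) a x := by
  induction hq using Submodule.span_induction with
  | mem q hq =>
    obtain ⟨⟨m, n⟩, rfl⟩ := hq
    simp only [conv_chi]
    by_cases h : 0 ≤ lam α (-m, -n)
    · refine ⟨fourierCoef f (-m) (-n) •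
        AddMonoidAlgebra.of ℂ _ (Multiplicative.ofAdd ⟨(-m, -n), h⟩), fun x => ?_⟩
      rw [map_smul, evalW_of, rpowW_one, one_smul]
      rfl
    · exact ⟨0, fun x => by rw [hf _ _ (not_le.1 h)]; simp⟩
  | zero => exact ⟨0, by simp⟩
  | add p q _ _ hp hq =>
    obtain ⟨a, ha⟩ := hp
    obtain ⟨b, hb⟩ := hq
    refine ⟨a + b, fun x => ?_⟩
    simp only [ContinuousMap.add_apply, mul_add, map_add]
    rw [integral_add (integrable_conv f p x) (integrable_conv f q x), ha, hb]
  | smul c q _ hq =>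
    obtain ⟨a, ha⟩ := hq
    refine ⟨c • a, fun x => ?_⟩
    simp only [ContinuousMap.smul_apply, smul_eq_mul, map_smul, mul_left_comm _ c]
    rw [integral_const_mul, ha]

/-- Real bump functions supported near the identity, the approximate identity for convolution. -/
theorem exists_bump {V : Set (Circle × Circle)} (hV : V ∈ nhds 1) :
    ∃ k : C(Circle × Circle, ℝ), (∀ v, 0 ≤ k v) ∧ (∀ v ∉ V, k v = 0) ∧
      ∫ v, k v ∂haarT2 = 1 := by
  obtain ⟨U, hUV, hU, h1⟩ := mem_nhds_iff.1 hV
  obtain ⟨k, hk0, hk1, hk⟩ := exists_continuous_zero_one_of_isClosed hU.isClosed_compl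
    (isClosed_singleton (x := (1 : Circle × Circle))) (by simpa using h1)
  have hpos : 0 < ∫ v, k v ∂haarT2 :=
    k.continuous.integral_pos_of_hasCompactSupport_nonneg_nonzero
      (HasCompactSupport.of_compactSpace _) (fun v => (hk v).1)
      (x := 1) (by rw [hk1 rfl]; simp)
  refine ⟨(∫ v, k v ∂haarT2)⁻¹ • k, fun v => ?_, fun v hv => ?_, ?_⟩
  · exact mul_nonneg (inv_nonneg.2 hpos.le) (hk v).1
  · simp [hk0 (show v ∈ Uᶜ from fun h => hv (hUV h))]
  · simp only [ContinuousMap.smul_apply, smul_eq_mul, integral_const_mul]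
    exact inv_mul_cancel₀ hpos.ne'

/-- The average `∫ f(xv) q(v) dv` approximates `f` uniformly when `q` is a trigonometric polynomial
close to a narrow bump function, and it is a half-plane polynomial by `conv_trigPoly`. -/
theorem mem_closure_of_mem_Aset {α : ℝ} {f : C(Circle × Circle, ℂ)} (hf : f ∈ Aset α) :
    f ∈ closure (Set.range (evalW (rpowW α 1))) := by
  rw [Metric.mem_closure_range_iff]
  intro ε hε
  -- `F v` is the translate of `f` by `v`; it depends continuously on `v` in the uniform norm.
  let F : C(Circle × Circle, C(Circle × Circle, ℂ)) :=
    ContinuousMap.curry (f.comp ⟨fun p : (Circle × Circle) × (Circle × Circle) => p.2 * p.1,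
      by fun_prop⟩)
  have hF : ∀ v x, F v x = f (x * v) := fun v x => rfl
  have hV : {v | ‖F v - F 1‖ < ε / 4} ∈ nhds (1 : Circle × Circle) :=
    (isOpen_lt (by fun_prop) continuous_const).mem_nhds (by simp; positivity)
  obtain ⟨k, hk0, hkV, hk1⟩ := exists_bump hV
  let kc : C(Circle × Circle, ℂ) := ⟨fun v => (k v : ℂ), by fun_prop⟩
  obtain ⟨q, hq, hkq⟩ := Metric.dense_iff.1 dense_trigPoly kc (ε / (4 * (‖f‖ + 1)))
    (by positivity)
  obtain ⟨a, ha⟩ := conv_trigPoly hf hkq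
  refine ⟨a, ?_⟩
  rw [dist_eq_norm]
  refine lt_of_le_of_lt ((ContinuousMap.norm_le _ (by positivity : 0 ≤ ε / 4 + ε / 4)).2
    fun x => ?_) (by linarith)
  have hkc : ∫ v, kc v ∂haarT2 = 1 := by
    change ∫ v, (k v : ℂ) ∂haarT2 = 1
    rw [integral_complex_ofReal, hk1, Complex.ofReal_one]
  have hsplit : (f - evalW (rpowW α 1) a) x =
      ∫ v, (f x - f (x * v)) * kc v ∂haarT2 + ∫ v, f (x * v) * (kc v - q v) ∂haarT2 := by
    simp only [sub_mul, mul_sub]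
    rw [integral_sub ((integrable_T2 kc).const_mul _) (integrable_conv f kc x),
      integral_sub (integrable_conv f kc x) (integrable_conv f q x), integral_const_mul, hkc,
      ContinuousMap.sub_apply, ha]
    ring
  rw [hsplit]
  refine norm_add_le_of_le ?_ ?_
  · have hi : Integrable (fun v => ε / 4 * k v) haarT2 :=
      (k.continuous.integrable_of_hasCompactSupport (HasCompactSupport.of_compactSpace _)).const_mul _
    refine (norm_integral_le_of_norm_le hi (Filter.Eventually.of_forall fun v => ?_)).trans ?_
    · have hkn : ‖kc v‖ = k v := by
        change ‖(k v : ℂ)‖ = k v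
        rw [Complex.norm_real, Real.norm_of_nonneg (hk0 v)]
      rw [norm_mul, hkn]
      by_cases hv : v ∈ {v | ‖F v - F 1‖ < ε / 4}
      · refine mul_le_mul_of_nonneg_right ?_ (hk0 v)
        have := (ContinuousMap.norm_coe_le_norm (F v - F 1) x).trans (le_of_lt hv)
        rw [norm_sub_rev]
        simpa [hF] using this
      · rw [hkV v hv]; simp
    · rw [integral_const_mul, hk1, mul_one]
  · refine (norm_integral_le_of_norm_le_const (C := ε / 4)
      (Filter.Eventually.of_forall fun v => ?_)).trans (by simp)
    rw [norm_mul]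
    have h1 : ‖f (x * v)‖ ≤ ‖f‖ + 1 := (f.norm_coe_le_norm _).trans (by linarith)
    have h2 : ‖kc v - q v‖ ≤ ε / (4 * (‖f‖ + 1)) := by
      refine (ContinuousMap.norm_coe_le_norm (kc - q) v).trans ?_
      rw [← dist_eq_norm, dist_comm]
      exact (Metric.mem_ball.1 hq).le
    calc _ ≤ (‖f‖ + 1) * (ε / (4 * (‖f‖ + 1))) := by gcongr
      _ = ε / 4 := by field_simp

/-! ### Conclusion -/

/-- The closure in `C(𝕋²)` of the algebra of half-plane polynomials. -/
def closedPoly (α : ℝ) : Subalgebra ℂ C(Circle × Circle, ℂ) :=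
  (evalW (rpowW α 1)).range.topologicalClosure

theorem coe_closedPoly (α : ℝ) :
    (closedPoly α : Set C(Circle × Circle, ℂ)) = closure (Set.range (evalW (rpowW α 1))) := by
  rw [closedPoly, Subalgebra.topologicalClosure_coe, AlgHom.coe_range]

theorem mem_closedPoly_iff {α : ℝ} {f : C(Circle × Circle, ℂ)} :
    f ∈ closedPoly α ↔ f ∈ Aset α := by
  rw [← SetLike.mem_coe, coe_closedPoly]
  refine ⟨fun h => ?_, mem_closure_of_mem_Aset⟩
  refine closure_minimal ?_ (isClosed_Aset α) h
  rintro _ ⟨a, rfl⟩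
  exact evalW_mem_Aset a

theorem isSquare_unit_closedPoly {α : ℝ} (hirr : Irrational α) (u : (closedPoly α)ˣ) :
    IsSquare u := by
  have : CompleteSpace (closedPoly α) :=
    (Subalgebra.isClosed_topologicalClosure _).completeSpace_coe
  refine exists_sq_of_contraction
    (fun r => (evalW (rpowW α r)).codRestrict (closedPoly α) fun a =>
      Subalgebra.le_topologicalClosure _ (evalW_mem_range_one _ a))
    (fun a => (continuous_evalW_rpowW a).subtype_mk _) (fun a r hr => norm_evalW_rpowW_le a hr)
    ?_ (fun a => ?_) u
  · intro b
    rw [closure_subtype, ← Set.range_comp]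
    have := b.2
    rwa [← SetLike.mem_coe, coe_closedPoly] at this
  · obtain ⟨c, hc⟩ := evalW_rpowW_zero hirr a
    exact ⟨c, Subtype.ext hc⟩

/-- If `exp(g) ∈ 𝒜_α` and `exp(g)` is invertible as an element of the Banach algebra `𝒜_α`
(i.e. it has an inverse lying in `𝒜_α`), then `exp(g/2) ∈ 𝒜_α`. -/
theorem exp_half_mem_of_invertible
    (α : ℝ) (hα : 0 < α) (hirr : Irrational α)
    (g : C(Circle × Circle, ℂ)) (hg : cexp g ∈ Aset α)
    (hinv : ∃ h ∈ Aset α, cexp g * h = 1) :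
    cexp ((2⁻¹ : ℂ) • g) ∈ Aset α := by
  obtain ⟨h, hh, hgh⟩ := hinv
  rw [← mem_closedPoly_iff] at hg hh ⊢
  let u : (closedPoly α)ˣ :=
    ⟨⟨_, hg⟩, ⟨_, hh⟩, Subtype.ext hgh, Subtype.ext ((mul_comm _ _).trans hgh)⟩
  obtain ⟨w, hw⟩ := isSquare_unit_closedPoly hirr u
  let k : C(Circle × Circle, ℂ) := (w : closedPoly α)
  have hk : cexp g = k * k :=
    congrArg (fun u : (closedPoly α)ˣ => ((u : closedPoly α) : C(Circle × Circle, ℂ))) hw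
  have hkx : ∀ x, Complex.exp (g x) = k x * k x := fun x => DFunLike.congr_fun hk x
  have hcases := isPreconnected_univ.eq_or_eq_neg_of_sq_eq
    (f := cexp ((2⁻¹ : ℂ) • g)) (g := k)
    (ContinuousMap.continuous _).continuousOn k.continuous.continuousOn
    (fun x _ => by
      change Complex.exp (2⁻¹ * g x) ^ 2 = k x ^ 2
      rw [← Complex.exp_nat_mul, sq, ← hkx]
      congr 1; push_cast; ring)
    (fun {x} _ h0 => Complex.exp_ne_zero (g x) (by rw [hkx, h0, mul_zero]))
  rcases hcases with h | h
  · rw [show cexp ((2⁻¹ : ℂ) • g) = k from ContinuousMap.ext fun x => h trivial]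
    exact (w : closedPoly α).2
  · rw [show cexp ((2⁻¹ : ℂ) • g) = -k from ContinuousMap.ext fun x => h trivial]
    exact neg_mem (w : closedPoly α).2
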